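/- Let {λ_n}_{n≥0} and {μ_n}_{n≥0} satisfy λ_n > 0, μ_{n+1} > 0 for n ≥ 0 and μ_0 ≥ 0, and let Q be the birth–death generator acting on ℓ²(π). Let a = (μ_1, λ_1, μ_2, λ_2, μ_3, λ_3, …) be the interlaced sequence. Assume: (a) a_n → ∞; (b) ∑_{n≥0} 1/a_n = ∞; (c) ∑_{n≥0} [ a_{n+1}/a_n − 1 ]⁻ < ∞. Then Q is self-adjoint, σ_p(Q) = ∅, and σ(Q) = (−∞, 0]. -/

import Mathlib

/-!
Write `κₙ = πₙ λₙ = πₙ₊₁ μₙ₊₁` and let `fₙ = κₙ (xₙ₊₁ - xₙ)` be the flux of `x`, so that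
`πₙ₊₁ (Q x)ₙ₊₁ = fₙ₊₁ - fₙ`. Almost monotonicity of the rates makes `κ` bounded below and `π`
bounded above, hence `∑ 1/λₙ`, `∑ πₙ`, `∑ 1/κₙ` and `∑ 1/√λₙ` all diverge.

*Self-adjointness.* Every `x` in the maximal domain has finite energy `∑ |fₙ|²/κₙ`: otherwise
summation by parts forces `|x|` to be eventually nondecreasing, contradicting `∑ πₙ = ∞`
(`Rates.energy`). The boundary term `x̄ₙ fₙ` then converges, and its limit is `0` by the
Carleman-type condition `∑ 1/√λₙ = ∞` (`Rates.boundary_zero`). Thus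
`⟨x, Q y⟩ = -∑ f̄ˣₙ fʸₙ/κₙ - μ₀ x̄₀ y₀` on the domain (`Rates.form`), so `Q` is symmetric; testing
against unit vectors shows that the adjoint is contained in the maximal operator.

*No solution in the domain.* For `s > 0` and `Q x = -s x` at all indices `n ≥ 1`, the quantity
`Aₙ = s κₙ xₙ² + fₙ²/πₙ + s xₙ fₙ` (for real `x`) satisfies `Aₙ₊₁ ≥ (1 - 4 ηₙ) Aₙ` with `η` summable.
If it is not eventually zero it stays above a positive constant, and then `s πₙ xₙ² + fₙ²/κₙ`
dominates a multiple of `1/λₙ`, which is not summable (`Rates.system_pos`). For `s = 0` the flux is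
constant and `∑ 1/κₙ = ∑ πₙ = ∞` suffices. Hence such an `x` in the domain is `0`
(`Rates.eq_zero_of_tail`). As eigenvalues are real and nonpositive by the form identity, there are
none; and `(Q + s) x = δ₀` has no solution in the domain, so `(-∞, 0]` lies in the spectrum.

*Resolvent set.* For `z ∉ (-∞, 0]` the equation `(Q - z) x = y` with Dirichlet condition at `K + 1`
has a solution bounded in `ℓ²(π)` uniformly in `K`, by the numerical range. Solutions of the
recurrence depend affinely on `x₀`, so a limit point of the initial values gives a solution in the
domain (`Rates.surj`).
-/

open Filter Topology

noncomputable section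

/-- Membership in the weighted ℓ² space with weight `w`. -/
def MemL2w (w : ℕ → ℝ) (f : ℕ → ℂ) : Prop :=
  Summable fun n => w n * ‖f n‖ ^ 2

/-- The weighted ℓ² inner product. -/
def innerW (w : ℕ → ℝ) (f g : ℕ → ℂ) : ℂ :=
  ∑' n, (w n : ℂ) * star (f n) * g n

/-- The formal tridiagonal action of the Jacobi matrix with off-diagonal entries `a`
and diagonal entries `b`:  `(Cx)₀ = b₀x₀ + a₀x₁`,
`(Cx)ₙ = aₙ₋₁xₙ₋₁ + bₙxₙ + aₙxₙ₊₁` for `n ≥ 1`. -/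
def jacobiAct (a b : ℕ → ℝ) (x : ℕ → ℂ) : ℕ → ℂ
  | 0 => (b 0 : ℂ) * x 0 + (a 0 : ℂ) * x 1
  | n + 1 => (a n : ℂ) * x n + (b (n + 1) : ℂ) * x (n + 1) + (a (n + 1) : ℂ) * x (n + 2)

/-- The maximal domain of the formal operator `T` inside the weighted ℓ² space. -/
def DomW (w : ℕ → ℝ) (T : (ℕ → ℂ) → ℕ → ℂ) : Set (ℕ → ℂ) :=
  {x | MemL2w w x ∧ MemL2w w (T x)}

/-- `T`, on its maximal domain in weighted ℓ², is self-adjoint: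
the graph of the adjoint operator coincides with the graph of `T`. -/
def IsSelfAdjointW (w : ℕ → ℝ) (T : (ℕ → ℂ) → ℕ → ℂ) : Prop :=
  ∀ y z : ℕ → ℂ, MemL2w w y → MemL2w w z →
    ((∀ x ∈ DomW w T, innerW w (T x) y = innerW w x z) ↔ (y ∈ DomW w T ∧ T y = z))

/-- The point spectrum (set of eigenvalues) of `T` on its maximal domain. -/
def eigenW (w : ℕ → ℝ) (T : (ℕ → ℂ) → ℕ → ℂ) : Set ℂ :=
  {l | ∃ x ∈ DomW w T, x ≠ 0 ∧ T x = fun n => l * x n}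

/-- The spectrum of `T`: those `l` for which `T - l` is not a bijection from the maximal
domain onto the weighted ℓ² space (for a closed operator this is the usual spectrum). -/
def spectrumW (w : ℕ → ℝ) (T : (ℕ → ℂ) → ℕ → ℂ) : Set ℂ :=
  {l | ¬ ((∀ x ∈ DomW w T, T x = (fun n => l * x n) → x = 0) ∧
          ∀ y : ℕ → ℂ, MemL2w w y → ∃ x ∈ DomW w T, (fun n => T x n - l * x n) = y)}

/-- The essential spectrum: the set of accumulation points of the spectrum. -/
def essSpectrumW (w : ℕ → ℝ) (T : (ℕ → ℂ) → ℕ → ℂ) : Set ℂ :=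
  {z | AccPt z (𝓟 (spectrumW w T))}

/-- The formal action of the birth and death process generator `Q`. -/
def bdAct (l m : ℕ → ℝ) (x : ℕ → ℂ) : ℕ → ℂ
  | 0 => (-(l 0 + m 0) : ℝ) * x 0 + (l 0 : ℝ) * x 1
  | n + 1 => (m (n + 1) : ℝ) * x n + (-(l (n + 1) + m (n + 1)) : ℝ) * x (n + 1)
      + (l (n + 1) : ℝ) * x (n + 2)

/-- The weights `π₀ = 1`, `πₙ = (λ₀⋯λₙ₋₁)/(μ₁⋯μₙ)` of the space `ℓ²(π)`. -/
def bdPi (l m : ℕ → ℝ) : ℕ → ℝ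
  | 0 => 1
  | n + 1 => bdPi l m n * (l n / m (n + 1))

/-- The interlaced sequence `a = (μ₁, λ₁, μ₂, λ₂, μ₃, λ₃, …)`. -/
def interlace (l m : ℕ → ℝ) : ℕ → ℝ :=
  fun n => if n % 2 = 0 then m (n / 2 + 1) else l (n / 2 + 1)

/-! ### Real sequences -/

/-- A positive sequence whose relative one-step decrease is summable stays bounded away from `0`. -/
lemma eventually_lower_bound {v η : ℕ → ℝ} (hη : Summable η) (hη0 : ∀ n, 0 ≤ η n) (N₀ : ℕ)
    (hv : ∀ n ≥ N₀, 0 < v n) (hstep : ∀ n ≥ N₀, (1 - η n) * v n ≤ v (n + 1)) :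
    ∃ c > 0, ∀ᶠ n in atTop, c ≤ v n := by
  have ht := (tendsto_sum_nat_add η).eventually (gt_mem_nhds (show (0 : ℝ) < 1 / 2 by norm_num))
  obtain ⟨N, hN, hNN⟩ := (ht.and (eventually_ge_atTop N₀)).exists
  have hsN : Summable fun k => η (k + N) := (summable_nat_add_iff N).2 hη
  have hpart : ∀ k, ∑ i ∈ Finset.range k, η (i + N) ≤ 1 / 2 := fun k =>
    (hsN.sum_le_tsum _ (fun i _ => hη0 _)).trans hN.le
  have hind : ∀ k, v N * (1 - ∑ i ∈ Finset.range k, η (i + N)) ≤ v (k + N) := by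
    intro k
    induction k with
    | zero => simp
    | succ k ih =>
      have h1 := hstep (k + N) (by omega)
      have h2 := hpart (k + 1)
      have h3 : 0 ≤ ∑ i ∈ Finset.range k, η (i + N) := Finset.sum_nonneg fun i _ => hη0 _
      have h4 := hη0 (k + N)
      have hvN := hv N hNN
      rw [Finset.sum_range_succ] at h2 ⊢
      have h5 : 0 ≤ 1 - η (k + N) := by linarith
      have h6 := mul_le_mul_of_nonneg_left ih h5
      have h7 : 0 ≤ v N * (η (k + N) * ∑ i ∈ Finset.range k, η (i + N)) := by positivity
      have e : k + 1 + N = k + N + 1 := by ring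
      rw [e]
      nlinarith
  have hvN := hv N hNN
  refine ⟨v N / 2, by linarith, ?_⟩
  filter_upwards [eventually_ge_atTop N] with n hn
  obtain ⟨k, rfl⟩ := Nat.exists_eq_add_of_le' hn
  have := hind k
  have h2 := hpart k
  nlinarith

lemma not_summable_of_eventually_le {f g : ℕ → ℝ} (hf : ¬ Summable f) (hf0 : ∀ n, 0 ≤ f n)
    {C : ℝ} (h : ∀ᶠ n in atTop, f n ≤ C * g n) : ¬ Summable g := by
  intro hg
  apply hf
  refine Summable.of_norm_bounded_eventually_nat (hg.mul_left C) ?_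
  filter_upwards [h] with n hn
  rwa [Real.norm_of_nonneg (hf0 n)]

/-! ### Consequences of the hypotheses on the rates -/

/-- The conductance `κₙ = πₙ λₙ = πₙ₊₁ μₙ₊₁` of the edge `{n, n + 1}`. -/
def kap (l m : ℕ → ℝ) (n : ℕ) : ℝ := bdPi l m n * l n

/-- The analytic content of the hypotheses on the rates: almost monotonicity along
`λₙ, μₙ₊₁, λₙ₊₁, …` with a summable relative error (`incr`), divergence statements, and the two
consequences that `κ` is bounded away from `0` and `π` is bounded (both eventually). -/
structure Rates (l m : ℕ → ℝ) : Prop where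
  hl : ∀ n, 0 < l n
  hm : ∀ n, 0 < m (n + 1)
  hm0 : 0 ≤ m 0
  l_top : Tendsto l atTop atTop
  m_top : Tendsto m atTop atTop
  l_div : ¬ Summable fun n => 1 / l n
  kap_low : ∃ c > 0, ∀ᶠ n in atTop, c ≤ kap l m n
  pi_inv_low : ∃ c > 0, ∀ᶠ n in atTop, c ≤ 1 / bdPi l m n
  incr : ∃ η : ℕ → ℝ, Summable η ∧ (∀ n, 0 ≤ η n) ∧
    (∀ᶠ n in atTop, (1 - η n) * l n ≤ m (n + 1)) ∧
    (∀ᶠ n in atTop, (1 - η n) * m (n + 1) ≤ l (n + 1))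

lemma bdPi_pos {l m : ℕ → ℝ} (hl : ∀ n, 0 < l n) (hm : ∀ n, 0 < m (n + 1)) (n : ℕ) :
    0 < bdPi l m n := by
  induction n with
  | zero => simp [bdPi]
  | succ n ih => exact mul_pos ih (div_pos (hl n) (hm n))

lemma kap_eq {l m : ℕ → ℝ} (hm : ∀ n, 0 < m (n + 1)) (n : ℕ) :
    bdPi l m (n + 1) * m (n + 1) = kap l m n := by
  have := (hm n).ne'
  simp only [bdPi, kap]; field_simp

lemma rates_of_interlace {l m : ℕ → ℝ} (hl : ∀ n, 0 < l n) (hm : ∀ n, 0 < m (n + 1))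
    (hm0 : 0 ≤ m 0)
    (h1 : Tendsto (interlace l m) atTop atTop)
    (h2 : ¬ Summable fun n : ℕ => 1 / interlace l m n)
    (h3 : Summable fun n : ℕ => max (-(interlace l m (n + 1) / interlace l m n - 1)) 0) :
    Rates l m := by
  have ev : ∀ n, interlace l m (2 * n) = m (n + 1) := fun n => by simp [interlace]
  have od : ∀ n, interlace l m (2 * n + 1) = l (n + 1) := fun n => by
    have : (2 * n + 1) / 2 = n := by omega
    simp [interlace, Nat.add_mod, this]
  set a := interlace l m with ha
  have apos : ∀ n, 0 < a n := fun n => by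
    rcases Nat.even_or_odd' n with ⟨k, rfl | rfl⟩
    · rw [ev]; exact hm k
    · rw [od]; exact hl _
  set ε : ℕ → ℝ := fun n => max (-(a (n + 1) / a n - 1)) 0 with hε
  have ε0 : ∀ n, 0 ≤ ε n := fun n => le_max_right _ _
  have hstep : ∀ n, (1 - ε n) * a n ≤ a (n + 1) := fun n => by
    have h : -(a (n + 1) / a n - 1) ≤ ε n := le_max_left _ _
    have h' : 1 - ε n ≤ a (n + 1) / a n := by linarith
    rwa [le_div_iff₀ (apos n)] at h'
  have inj0 : Function.Injective fun n : ℕ => 2 * n := fun a b h => by simpa using h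
  have inj1 : Function.Injective fun n : ℕ => 2 * n + 1 := fun a b h => by simpa using h
  have t0 : Tendsto (fun n : ℕ => 2 * n) atTop atTop :=
    tendsto_atTop_mono (fun n => show n ≤ _ by omega) tendsto_id
  have t1 : Tendsto (fun n : ℕ => 2 * n + 1) atTop atTop :=
    tendsto_atTop_mono (fun n => show n ≤ _ by omega) tendsto_id
  have s0 : Summable fun n => ε (2 * n) := h3.comp_injective inj0
  have s1 : Summable fun n => ε (2 * n + 1) := h3.comp_injective inj1
  have ml : ∀ n, (1 - ε (2 * n)) * m (n + 1) ≤ l (n + 1) := fun n => by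
    have := hstep (2 * n); rwa [ev, od] at this
  have lm : ∀ n, (1 - ε (2 * n + 1)) * l (n + 1) ≤ m (n + 2) := fun n => by
    have := hstep (2 * n + 1)
    rwa [od, show 2 * n + 1 + 1 = 2 * (n + 1) by ring, ev] at this
  have pp := bdPi_pos hl hm
  -- shifted error sequence for the step from `λₙ` to `μₙ₊₁`; the value at `0` is irrelevant
  set δ : ℕ → ℝ := fun n => if n = 0 then 0 else ε (2 * n - 1) with hδ
  have δ0 : ∀ n, 0 ≤ δ n := fun n => by
    simp only [hδ]; split_ifs <;> simp [ε0]
  have δ_succ : ∀ n, δ (n + 1) = ε (2 * n + 1) := fun n => by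
    simp only [hδ]; rw [if_neg (by omega)]; congr 1
  have s1' : Summable δ := by
    rw [← summable_nat_add_iff 1]; simpa only [δ_succ] using s1
  have lm' : ∀ n ≥ 1, (1 - δ n) * l n ≤ m (n + 1) := fun n hn => by
    obtain ⟨k, rfl⟩ := Nat.exists_eq_add_of_le' hn
    rw [δ_succ]; exact lm k
  refine ⟨hl, hm, hm0, ?_, ?_, ?_, ?_, ?_, ?_⟩
  · rw [← tendsto_add_atTop_iff_nat 1]
    exact (h1.comp t1).congr fun n => od n
  · rw [← tendsto_add_atTop_iff_nat 1]
    exact (h1.comp t0).congr fun n => ev n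
  · intro hs
    apply h2
    have hs1 : Summable fun n => 1 / l (n + 1) := (summable_nat_add_iff 1).2 hs
    have hs0 : Summable fun n => 1 / m (n + 1) := by
      rw [← summable_nat_add_iff 1]
      refine Summable.of_norm_bounded_eventually_nat (hs1.mul_left 2) ?_
      have := s1.tendsto_atTop_zero.eventually (gt_mem_nhds (show (0 : ℝ) < 1 / 2 by norm_num))
      filter_upwards [this] with n hn
      have h := lm n
      have h0 := hl (n + 1)
      have hm' := hm (n + 1)
      rw [Real.norm_of_nonneg (by positivity)]
      have : l (n + 1) ≤ 2 * m (n + 1 + 1) := by nlinarith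
      rw [mul_one_div, div_le_div_iff₀ hm' h0]; linarith
    have e0 : Summable fun n => 1 / a (2 * n) := by simpa only [ev] using hs0
    have e1 : Summable fun n => 1 / a (2 * n + 1) := by simpa only [od] using hs1
    exact (HasSum.even_add_odd (f := fun n => 1 / a n) e0.hasSum e1.hasSum).summable
  · refine eventually_lower_bound s0 (fun n => ε0 _) 0 (fun n _ => mul_pos (pp n) (hl n)) ?_
    intro n _
    have h := mul_le_mul_of_nonneg_left (ml n) (pp (n + 1)).le
    have e := kap_eq (l := l) hm n
    simp only [kap] at e ⊢
    rw [← e]; linarith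
  · refine eventually_lower_bound s1' δ0 1 (fun n _ => one_div_pos.2 (pp n)) ?_
    intro n hn
    have h := lm' n hn
    have p := pp n
    have hl' := hl n
    have hm' := hm n
    simp only [bdPi]
    rw [mul_one_div, div_le_iff₀ p, one_div_mul_eq_div]
    rw [show bdPi l m n / (bdPi l m n * (l n / m (n + 1))) = m (n + 1) / l n by field_simp]
    rwa [le_div_iff₀ hl']
  · refine ⟨fun n => ε (2 * n) + δ n, s0.add s1', fun n => add_nonneg (ε0 _) (δ0 _), ?_, ?_⟩
    · filter_upwards [eventually_ge_atTop 1] with n hn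
      have := lm' n hn
      nlinarith [mul_nonneg (ε0 (2 * n)) (hl n).le]
    · refine Eventually.of_forall fun n => ?_
      have := ml n
      nlinarith [mul_nonneg (δ0 n) (hm n).le]

section
variable {l m : ℕ → ℝ}

lemma Rates.pi_pos (R : Rates l m) (n : ℕ) : 0 < bdPi l m n := bdPi_pos R.hl R.hm n

lemma Rates.kap_pos (R : Rates l m) (n : ℕ) : 0 < kap l m n := mul_pos (R.pi_pos n) (R.hl n)

lemma Rates.pi_div (R : Rates l m) : ¬ Summable (bdPi l m) := by
  obtain ⟨c, hc, h⟩ := R.kap_low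
  refine not_summable_of_eventually_le (C := 1 / c) R.l_div
    (fun n => one_div_nonneg.2 (R.hl n).le) ?_
  filter_upwards [h] with n hn
  have := R.hl n
  simp only [kap] at hn
  rw [one_div_mul_eq_div, div_le_div_iff₀ this hc]; linarith

lemma Rates.kap_inv_div (R : Rates l m) : ¬ Summable fun n => 1 / kap l m n := by
  obtain ⟨c, hc, h⟩ := R.pi_inv_low
  refine not_summable_of_eventually_le (C := 1 / c) R.l_div
    (fun n => one_div_nonneg.2 (R.hl n).le) ?_
  filter_upwards [h] with n hn
  have hl := R.hl n
  have hp := R.pi_pos n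
  simp only [kap]
  rw [le_div_iff₀ hp] at hn
  rw [div_mul_div_comm, div_le_div_iff₀ hl (by positivity)]
  nlinarith

/-- The Carleman-type condition that makes boundary terms in summations by parts vanish. -/
lemma Rates.sqrt_div (R : Rates l m) : ¬ Summable fun n => 1 / √(l n) := by
  refine not_summable_of_eventually_le (C := 1) R.l_div
    (fun n => one_div_nonneg.2 (R.hl n).le) ?_
  filter_upwards [R.l_top.eventually_ge_atTop 1] with n hn
  rw [one_mul]
  have : √(l n) ≤ l n := by
    rw [Real.sqrt_le_left (by positivity)]; nlinarith
  exact one_div_le_one_div_of_le (Real.sqrt_pos.2 (R.hl n)) this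

/-! ### The first-order system for real solutions -/

/-- The tail of a real solution of `Q u = -s u` with `s > 0`, written as a first-order system for
`u` and its flux `f`, cannot be square-summable with finite energy unless it vanishes. The energies
`A n` and `B n` satisfy `B n - A n = (μₙ₊₁ - λₙ) fₙ² / κₙ` and
`A (n + 1) - B n = s πₙ₊₁ (λₙ₊₁ - μₙ₊₁) uₙ₊₁²`, so almost monotonicity of the rates keeps `A`
bounded below, whence `s π u² + f² / κ` dominates a multiple of `1 / λ`. -/
lemma Rates.system_pos (R : Rates l m) {s : ℝ} (hs : 0 < s) {u f : ℕ → ℝ}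
    (hu : ∀ n, u (n + 1) = u n + f n / kap l m n)
    (hf : ∀ n, f (n + 1) = f n - s * bdPi l m (n + 1) * u (n + 1))
    (su : Summable fun n => bdPi l m n * u n ^ 2)
    (sf : Summable fun n => f n ^ 2 / kap l m n) : ∀ n, u n = 0 ∧ f n = 0 := by
  obtain ⟨η, hη, η0, hlm, hml⟩ := R.incr
  -- vanishing at one index propagates backwards
  have back : ∀ n k, k ≤ n → u n = 0 → f n = 0 → u k = 0 ∧ f k = 0 := by
    intro n
    induction n with
    | zero => intro k hk h1 h2; obtain rfl : k = 0 := by omega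
              exact ⟨h1, h2⟩
    | succ n ih =>
      intro k hk h1 h2
      rcases Nat.lt_or_ge n k with h | h
      · obtain rfl : k = n + 1 := by omega
        exact ⟨h1, h2⟩
      · have f0 : f n = 0 := by have := hf n; rw [h1, h2] at this; linarith
        have u0 : u n = 0 := by have := hu n; rw [h1, f0] at this; simpa using this.symm
        exact ih k h u0 f0
  set A : ℕ → ℝ := fun n => s * kap l m n * u n ^ 2 + f n ^ 2 / bdPi l m n + s * u n * f n with hA
  set B : ℕ → ℝ := fun n => s * kap l m n * u (n + 1) ^ 2 + f n ^ 2 / bdPi l m (n + 1)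
    - s * u (n + 1) * f n with hB
  have key : ∀ {p r x y : ℝ}, 0 < p → s ≤ r →
      |s * x * y| ≤ (s * (p * r) * x ^ 2 + y ^ 2 / p) / 2 := by
    intro p r x y hp hr
    have h1 : 0 ≤ s * (s * p * x ^ 2) := by positivity
    have e1 : s * (p * s) * x ^ 2 + y ^ 2 / p - 2 * (s * x * y) = (s * p * x - y) ^ 2 / p := by
      field_simp; ring
    have e2 : s * (p * s) * x ^ 2 + y ^ 2 / p + 2 * (s * x * y) = (s * p * x + y) ^ 2 / p := by
      field_simp; ring
    have g1 : 0 ≤ (s * p * x - y) ^ 2 / p := by positivity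
    have g2 : 0 ≤ (s * p * x + y) ^ 2 / p := by positivity
    have g3 : s * (p * s) * x ^ 2 ≤ s * (p * r) * x ^ 2 := by gcongr
    rw [abs_le]; constructor <;> linarith
  have hη2 := hη.tendsto_atTop_zero.eventually (gt_mem_nhds (show (0 : ℝ) < 1 / 4 by norm_num))
  have hbig := (((R.l_top.eventually_ge_atTop s).and ((R.m_top.comp
    (tendsto_add_atTop_nat 1)).eventually_ge_atTop s)).and (hlm.and hml)).and hη2
  obtain ⟨N, hN⟩ := eventually_atTop.1 hbig
  have Aest : ∀ n ≥ N, (s * kap l m n * u n ^ 2 + f n ^ 2 / bdPi l m n) / 2 ≤ A n ∧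
      A n ≤ 3 / 2 * (s * kap l m n * u n ^ 2 + f n ^ 2 / bdPi l m n) := by
    intro n hn
    have := abs_le.1 (key (x := u n) (y := f n) (R.pi_pos n) (hN n hn).1.1.1)
    simp only [hA, kap] at *
    constructor <;> linarith
  have Best : ∀ n ≥ N,
      (s * kap l m n * u (n + 1) ^ 2 + f n ^ 2 / bdPi l m (n + 1)) / 2 ≤ B n := by
    intro n hn
    have := abs_le.1 (key (x := u (n + 1)) (y := f n) (R.pi_pos (n + 1)) (hN n hn).1.1.2)
    simp only [Function.comp, kap_eq R.hm] at this
    simp only [hB] at *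
    linarith
  have AB : ∀ n, B n = A n + (m (n + 1) - l n) * (f n ^ 2 / kap l m n) := by
    intro n
    have hp := (R.pi_pos n).ne'
    have hp' := (R.pi_pos (n + 1)).ne'
    have hk := (R.kap_pos n).ne'
    have e1 : f n ^ 2 / bdPi l m n = l n * (f n ^ 2 / kap l m n) := by
      have := (R.hl n).ne'
      simp only [kap]; field_simp
    have e2 : f n ^ 2 / bdPi l m (n + 1) = m (n + 1) * (f n ^ 2 / kap l m n) := by
      have := (R.hm n).ne'
      rw [← kap_eq R.hm]; field_simp
    simp only [hA, hB]
    rw [e1, e2, hu n]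
    field_simp
    ring
  have BA : ∀ n, A (n + 1) = B n +
      (l (n + 1) - m (n + 1)) * (s * bdPi l m (n + 1) * u (n + 1) ^ 2) := by
    intro n
    have hp' := (R.pi_pos (n + 1)).ne'
    simp only [hA, hB]
    rw [← kap_eq R.hm n, hf n]
    simp only [kap]
    field_simp
    ring
  have step : ∀ n ≥ N, (1 - 4 * η n) * A n ≤ A (n + 1) := by
    intro n hn
    obtain ⟨⟨⟨h1, h2⟩, h3, h4⟩, h5⟩ := hN n hn
    have pk := R.kap_pos n
    have pp := R.pi_pos n
    have pp' := R.pi_pos (n + 1)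
    have a1 := (Aest n hn).1
    have b1 := Best n hn
    have q1 : 0 ≤ s * kap l m n * u n ^ 2 := by positivity
    have q2 : 0 ≤ s * kap l m n * u (n + 1) ^ 2 := by positivity
    have q3 : 0 ≤ f n ^ 2 / bdPi l m (n + 1) := by positivity
    have q4 : 0 ≤ f n ^ 2 / bdPi l m n := by positivity
    have hη0 := η0 n
    have s1 : (1 - 2 * η n) * A n ≤ B n := by
      have e1 : f n ^ 2 / bdPi l m n = l n * (f n ^ 2 / kap l m n) := by
        have := (R.hl n).ne'
        simp only [kap]; field_simp
      have t : 0 ≤ f n ^ 2 / kap l m n := by positivity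
      have t1 := mul_le_mul_of_nonneg_right h3 t
      have t2 : η n * (f n ^ 2 / bdPi l m n) ≤ η n * (2 * A n) :=
        mul_le_mul_of_nonneg_left (by linarith) hη0
      rw [AB n]
      rw [e1] at t2
      nlinarith
    have s2 : (1 - 2 * η n) * B n ≤ A (n + 1) := by
      have t : 0 ≤ s * bdPi l m (n + 1) * u (n + 1) ^ 2 := by positivity
      have t1 := mul_le_mul_of_nonneg_right h4 t
      have t2 : η n * (s * kap l m n * u (n + 1) ^ 2) ≤ η n * (2 * B n) :=
        mul_le_mul_of_nonneg_left (by linarith) hη0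
      rw [BA n]
      rw [← kap_eq R.hm n] at t2
      nlinarith
    have A0 : 0 ≤ A n := by linarith
    have := mul_le_mul_of_nonneg_left s1 (show 0 ≤ 1 - 2 * η n by linarith)
    nlinarith [mul_nonneg (mul_nonneg hη0 hη0) A0]
  by_cases hz : ∀ n ≥ N, 0 < A n
  · exfalso
    obtain ⟨c, hc, hev⟩ := eventually_lower_bound (hη.mul_left 4)
      (fun n => mul_nonneg (by norm_num) (η0 n)) N hz step
    refine not_summable_of_eventually_le
      (g := fun n => s * (bdPi l m n * u n ^ 2) + f n ^ 2 / kap l m n) (C := 3 / (2 * c))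
      R.l_div (fun n => one_div_nonneg.2 (R.hl n).le) ?_ ((su.mul_left s).add sf)
    filter_upwards [hev, eventually_ge_atTop N] with n h1 hn
    have a2 := (Aest n hn).2
    have hl := R.hl n
    have hp := R.pi_pos n
    have e : s * kap l m n * u n ^ 2 + f n ^ 2 / bdPi l m n
        = l n * (s * (bdPi l m n * u n ^ 2) + f n ^ 2 / kap l m n) := by
      simp only [kap]; field_simp
    rw [e] at a2
    rw [div_mul_eq_mul_div, div_le_div_iff₀ hl (by positivity)]
    linarith
  · push Not at hz
    obtain ⟨n, hn, hA0⟩ := hz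
    have pk := R.kap_pos n
    have pp := R.pi_pos n
    have a1 := (Aest n hn).1
    have q1 : 0 ≤ s * kap l m n * u n ^ 2 := by positivity
    have q4 : 0 ≤ f n ^ 2 / bdPi l m n := by positivity
    have z1 : s * kap l m n * u n ^ 2 = 0 := by linarith
    have z2 : f n ^ 2 / bdPi l m n = 0 := by linarith
    have hun : u n = 0 := by
      have : s * kap l m n ≠ 0 := by positivity
      simpa [this, hs.ne', pk.ne'] using z1
    have hfn : f n = 0 := by simpa [pp.ne'] using z2
    -- the zero also propagates forwards
    have forw : ∀ k, u (n + k) = 0 ∧ f (n + k) = 0 := by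
      intro k
      induction k with
      | zero => exact ⟨hun, hfn⟩
      | succ k ih =>
        have hu' : u (n + k + 1) = 0 := by rw [hu, ih.1, ih.2]; simp
        exact ⟨hu', by rw [← add_assoc, hf, hu', ih.2]; simp⟩
    intro k
    exact back (n + k) k (by omega) (forw k).1 (forw k).2

/-- The case `s = 0`: the flux is constant, so finite energy forces it to vanish, and `u` is then
a constant in `ℓ²(π)`. -/
lemma Rates.system_zero (R : Rates l m) {u f : ℕ → ℝ}
    (hu : ∀ n, u (n + 1) = u n + f n / kap l m n)
    (hf : ∀ n, f (n + 1) = f n)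
    (su : Summable fun n => bdPi l m n * u n ^ 2)
    (sf : Summable fun n => f n ^ 2 / kap l m n) : ∀ n, u n = 0 ∧ f n = 0 := by
  have hfc : ∀ n, f n = f 0 := fun n => by
    induction n with
    | zero => rfl
    | succ n ih => rw [hf, ih]
  have f0 : f 0 = 0 := by
    by_contra h
    apply R.kap_inv_div
    have := sf.mul_left (1 / f 0 ^ 2)
    refine this.congr fun n => ?_
    rw [hfc n]; field_simp
  have huc : ∀ n, u n = u 0 := fun n => by
    induction n with
    | zero => rfl
    | succ n ih => rw [hu, ih, hfc, f0]; simp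
  have u0 : u 0 = 0 := by
    by_contra h
    apply R.pi_div
    have := su.mul_left (1 / u 0 ^ 2)
    refine this.congr fun n => ?_
    rw [huc n]; field_simp
  intro n
  exact ⟨by rw [huc, u0], by rw [hfc, f0]⟩

/-! ### Flux, energy and the quadratic form -/

/-- The flux `κₙ (xₙ₊₁ - xₙ)` through the edge `{n, n + 1}`; `π Q x` is its discrete divergence. -/
def flux (l m : ℕ → ℝ) (x : ℕ → ℂ) (n : ℕ) : ℂ := (kap l m n : ℂ) * (x (n + 1) - x n)

lemma pi_act_zero (x : ℕ → ℂ) :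
    (bdPi l m 0 : ℂ) * bdAct l m x 0 = flux l m x 0 - m 0 * x 0 := by
  simp [bdPi, bdAct, flux, kap]; ring

lemma pi_act_succ (hm : ∀ n, 0 < m (n + 1)) (x : ℕ → ℂ) (n : ℕ) :
    (bdPi l m (n + 1) : ℂ) * bdAct l m x (n + 1) = flux l m x (n + 1) - flux l m x n := by
  have h : (bdPi l m (n + 1) : ℂ) * m (n + 1) = kap l m n := by
    rw [← kap_eq hm n]; push_cast; ring
  simp only [bdAct, flux]
  rw [← h]
  simp only [kap]; push_cast; ring

lemma Rates.next_eq (R : Rates l m) (x : ℕ → ℂ) (n : ℕ) :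
    x (n + 1) = x n + flux l m x n / kap l m n := by
  have : (kap l m n : ℂ) ≠ 0 := by exact_mod_cast (R.kap_pos n).ne'
  simp only [flux]; field_simp; ring

/-- Summation by parts. -/
lemma Rates.form_partial (R : Rates l m) (x y : ℕ → ℂ) (N : ℕ) :
    ∑ n ∈ Finset.range (N + 1), (bdPi l m n : ℂ) * star (x n) * bdAct l m y n =
      star (x N) * flux l m y N
      - ∑ n ∈ Finset.range N, ((1 / kap l m n : ℝ) : ℂ) * star (flux l m x n) * flux l m y n
      - m 0 * star (x 0) * y 0 := by
  induction N with
  | zero =>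
    have := pi_act_zero (l := l) (m := m) y
    simp only [zero_add, Finset.sum_range_one, Finset.sum_range_zero]
    linear_combination star (x 0) * this
  | succ N ih =>
    rw [Finset.sum_range_succ, ih, Finset.sum_range_succ _ N]
    have h := pi_act_succ (l := l) R.hm y N
    have h2 : star (x (N + 1)) = star (x N) + star (flux l m x N) / kap l m N := by
      rw [R.next_eq x N]; simp
    push_cast
    rw [one_div]
    linear_combination star (x (N + 1)) * h - flux l m y N * h2

lemma summable_innerW {w : ℕ → ℝ} (hw : ∀ n, 0 ≤ w n) {x y : ℕ → ℂ} (hx : MemL2w w x)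
    (hy : MemL2w w y) : Summable fun n => (w n : ℂ) * star (x n) * y n := by
  refine Summable.of_norm_bounded (hx.add hy) fun n => ?_
  rw [norm_mul, norm_mul, norm_star, Complex.norm_real, Real.norm_of_nonneg (hw n)]
  have h1 : ‖x n‖ * ‖y n‖ ≤ ‖x n‖ ^ 2 + ‖y n‖ ^ 2 := by
    nlinarith [sq_nonneg (‖x n‖ - ‖y n‖), sq_nonneg ‖x n‖, sq_nonneg ‖y n‖]
  have := mul_le_mul_of_nonneg_left h1 (hw n)
  linarith

lemma Rates.tendsto_partial (R : Rates l m) {x y : ℕ → ℂ} (hx : MemL2w (bdPi l m) x)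
    (hy : MemL2w (bdPi l m) y) :
    Tendsto (fun N => ∑ n ∈ Finset.range (N + 1), (bdPi l m n : ℂ) * star (x n) * y n) atTop
      (𝓝 (innerW (bdPi l m) x y)) :=
  ((summable_innerW (fun n => (R.pi_pos n).le) hx hy).hasSum.tendsto_sum_nat).comp
    (tendsto_add_atTop_nat 1)

/-- Elements of the maximal domain have finite energy: otherwise summation by parts makes
`Re (x̄ₙ · fluxₙ)` tend to infinity, so `|x|` is eventually nondecreasing, which is incompatible
with `x ∈ ℓ²(π)` because `∑ πₙ = ∞`. -/
lemma Rates.energy (R : Rates l m) {x : ℕ → ℂ} (hx : x ∈ DomW (bdPi l m) (bdAct l m)) :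
    MemL2w (fun n => 1 / kap l m n) (flux l m x) := by
  have k0 : ∀ n, 0 ≤ 1 / kap l m n * ‖flux l m x n‖ ^ 2 := fun n =>
    mul_nonneg (one_div_nonneg.2 (R.kap_pos n).le) (sq_nonneg _)
  by_contra hns
  have hdiv := (not_summable_iff_tendsto_nat_atTop_of_nonneg k0).1 hns
  have hlim := (Complex.continuous_re.tendsto _).comp (R.tendsto_partial hx.1 hx.2)
  have hre : ∀ N, (star (x N) * flux l m x N).re =
      (∑ n ∈ Finset.range (N + 1), (bdPi l m n : ℂ) * star (x n) * bdAct l m x n).re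
      + m 0 * ‖x 0‖ ^ 2
      + ∑ n ∈ Finset.range N, 1 / kap l m n * ‖flux l m x n‖ ^ 2 := by
    intro N
    rw [R.form_partial x x N]
    have e : ∀ (r : ℝ) (z : ℂ), ((r : ℂ) * star z * z).re = r * ‖z‖ ^ 2 := fun r z => by
      rw [mul_assoc, Complex.star_def, Complex.conj_mul']
      norm_cast
    rw [Complex.sub_re, Complex.sub_re, Complex.re_sum, e]
    simp only [e]
    ring
  have htop : Tendsto (fun N => (star (x N) * flux l m x N).re) atTop atTop := by
    simp only [hre]
    exact (hlim.add_const (m 0 * ‖x 0‖ ^ 2)).add_atTop hdiv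
  obtain ⟨M, hM⟩ := eventually_atTop.1 (htop.eventually_ge_atTop 1)
  have hmono : ∀ n ≥ M, ‖x n‖ ^ 2 ≤ ‖x (n + 1)‖ ^ 2 := by
    intro n hn
    have h1 := hM n hn
    have hk := R.kap_pos n
    rw [R.next_eq x n]
    have hr : (flux l m x n / kap l m n).re = (flux l m x n).re / kap l m n :=
      Complex.div_ofReal_re _ _
    have hi : (flux l m x n / kap l m n).im = (flux l m x n).im / kap l m n :=
      Complex.div_ofReal_im _ _
    rw [← Complex.normSq_eq_norm_sq, ← Complex.normSq_eq_norm_sq, Complex.normSq_apply,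
      Complex.normSq_apply, Complex.add_re, Complex.add_im, hr, hi]
    simp only [Complex.star_def, Complex.mul_re, Complex.conj_re, Complex.conj_im] at h1
    have h2 : 0 ≤ ((x n).re * (flux l m x n).re + (x n).im * (flux l m x n).im) / kap l m n :=
      div_nonneg (by linarith) hk.le
    have h3 : ((x n).re * (flux l m x n).re + (x n).im * (flux l m x n).im) / kap l m n
      = (x n).re * ((flux l m x n).re / kap l m n)
        + (x n).im * ((flux l m x n).im / kap l m n) := by ring
    rw [h3] at h2
    nlinarith [sq_nonneg ((flux l m x n).re / kap l m n),
      sq_nonneg ((flux l m x n).im / kap l m n)]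
  have hge : ∀ n ≥ M, ‖x M‖ ^ 2 ≤ ‖x n‖ ^ 2 := fun n hn =>
    Nat.le_induction le_rfl (fun k hk ih => ih.trans (hmono k hk)) n hn
  have hpos : 0 < ‖x M‖ ^ 2 := by
    have hne : x M ≠ 0 := by
      intro h0
      have := hM M le_rfl
      rw [h0] at this
      norm_num at this
    positivity
  refine not_summable_of_eventually_le (C := 1 / ‖x M‖ ^ 2) R.pi_div
    (fun n => (R.pi_pos n).le) ?_ hx.1
  filter_upwards [eventually_ge_atTop M] with n hn
  rw [one_div_mul_eq_div, le_div_iff₀ hpos]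
  exact mul_le_mul_of_nonneg_left (hge n hn) (R.pi_pos n).le

/-- The boundary term in the summation by parts tends to `0`, by the Carleman condition. -/
lemma Rates.boundary_zero (R : Rates l m) {x F : ℕ → ℂ} (hx : MemL2w (bdPi l m) x)
    (hF : MemL2w (fun n => 1 / kap l m n) F) {W : ℂ}
    (h : Tendsto (fun n => star (x n) * F n) atTop (𝓝 W)) : W = 0 := by
  by_contra hW
  have hWp : 0 < ‖W‖ := norm_pos_iff.2 hW
  have hev := h.norm.eventually (lt_mem_nhds (show ‖W‖ / 2 < ‖W‖ by linarith))
  refine not_summable_of_eventually_le (C := 2 / ‖W‖) R.sqrt_div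
    (fun n => by positivity) ?_ (hx.add hF)
  filter_upwards [hev] with n hn
  rw [norm_mul, norm_star] at hn
  have hl := R.hl n
  have hp := R.pi_pos n
  have hs := Real.sqrt_pos.2 hl
  have hs2 := Real.sq_sqrt hl.le
  set t := √(l n)
  have hk : kap l m n = bdPi l m n * t ^ 2 := by rw [hs2]; rfl
  have key : ‖x n‖ * ‖F n‖ * (1 / t) ≤
      bdPi l m n * ‖x n‖ ^ 2 + 1 / kap l m n * ‖F n‖ ^ 2 := by
    have e : bdPi l m n * ‖x n‖ ^ 2 + 1 / kap l m n * ‖F n‖ ^ 2 - ‖x n‖ * ‖F n‖ * (1 / t)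
        = ((bdPi l m n * ‖x n‖ - ‖F n‖ / t) ^ 2 + bdPi l m n * ‖x n‖ * (‖F n‖ / t))
          / bdPi l m n := by
      rw [hk]; field_simp; ring
    have : 0 ≤ ((bdPi l m n * ‖x n‖ - ‖F n‖ / t) ^ 2 + bdPi l m n * ‖x n‖ * (‖F n‖ / t))
          / bdPi l m n := by positivity
    linarith
  have k2 : ‖W‖ / 2 * (1 / t) ≤ ‖x n‖ * ‖F n‖ * (1 / t) :=
    mul_le_mul_of_nonneg_right hn.le (by positivity)
  rw [div_mul_eq_mul_div, le_div_iff₀ hWp]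
  linarith

lemma Rates.form (R : Rates l m) {x y : ℕ → ℂ} (hx : x ∈ DomW (bdPi l m) (bdAct l m))
    (hy : y ∈ DomW (bdPi l m) (bdAct l m)) :
    innerW (bdPi l m) x (bdAct l m y) =
      - innerW (fun n => 1 / kap l m n) (flux l m x) (flux l m y) - m 0 * star (x 0) * y 0 := by
  have h1 := R.tendsto_partial hx.1 hy.2
  have h2 := (summable_innerW (fun n => one_div_nonneg.2 (R.kap_pos n).le)
    (R.energy hx) (R.energy hy)).hasSum.tendsto_sum_nat
  have h3 : Tendsto (fun N => star (x N) * flux l m y N) atTop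
      (𝓝 (innerW (bdPi l m) x (bdAct l m y)
        + innerW (fun n => 1 / kap l m n) (flux l m x) (flux l m y) + m 0 * star (x 0) * y 0)) := by
    refine ((h1.add h2).add_const (m 0 * star (x 0) * y 0)).congr fun N => ?_
    rw [R.form_partial x y N]; ring
  have := R.boundary_zero hx.1 (R.energy hy) h3
  linear_combination this

lemma star_innerW (w : ℕ → ℝ) (x y : ℕ → ℂ) : star (innerW w x y) = innerW w y x := by
  simp only [innerW]
  rw [Complex.star_def, Complex.conj_tsum]
  refine tsum_congr fun n => ?_
  simp; ring

lemma Rates.symm (R : Rates l m) {x y : ℕ → ℂ} (hx : x ∈ DomW (bdPi l m) (bdAct l m))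
    (hy : y ∈ DomW (bdPi l m) (bdAct l m)) :
    innerW (bdPi l m) (bdAct l m x) y = innerW (bdPi l m) x (bdAct l m y) := by
  rw [← star_innerW, R.form hy hx, R.form hx hy, star_sub, star_neg, star_innerW]
  simp; ring

/-! ### Self-adjointness -/

lemma memL2w_of_finite_support {w : ℕ → ℝ} {x : ℕ → ℂ} (N : ℕ) (h : ∀ n ≥ N, x n = 0) :
    MemL2w w x := by
  refine summable_of_ne_finset_zero (s := Finset.range N) fun n hn => ?_
  rw [h n (by simpa using hn)]; simp

lemma single_mem_Dom (k : ℕ) : (Pi.single k 1 : ℕ → ℂ) ∈ DomW (bdPi l m) (bdAct l m) := by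
  have h0 : ∀ n, n ≠ k → (Pi.single k 1 : ℕ → ℂ) n = 0 := fun n hn => Pi.single_eq_of_ne hn _
  refine ⟨memL2w_of_finite_support (k + 1) fun n hn => h0 n (by omega),
    memL2w_of_finite_support (k + 2) fun n hn => ?_⟩
  obtain ⟨n, rfl⟩ := Nat.exists_eq_add_of_le' (show 1 ≤ n by omega)
  simp only [bdAct]
  rw [h0 n (by omega), h0 (n + 1) (by omega), h0 (n + 2) (by omega)]; simp

lemma innerW_single (w : ℕ → ℝ) (k : ℕ) (z : ℕ → ℂ) :
    innerW w (Pi.single k 1) z = w k * z k := by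
  rw [innerW, tsum_eq_single k]
  · simp
  · intro n hn; rw [Pi.single_eq_of_ne hn]; simp

lemma innerW_act_single (hm : ∀ n, 0 < m (n + 1)) (k : ℕ) (y : ℕ → ℂ) :
    innerW (bdPi l m) (bdAct l m (Pi.single k 1)) y = bdPi l m k * bdAct l m y k := by
  have h0 : ∀ n, n ≠ k → (Pi.single k 1 : ℕ → ℂ) n = 0 := fun n hn => Pi.single_eq_of_ne hn _
  have h1 : (Pi.single k 1 : ℕ → ℂ) k = 1 := Pi.single_eq_same _ _
  have hp : ∀ n, (bdPi l m (n + 1) : ℂ) * m (n + 1) = bdPi l m n * l n := fun n => by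
    exact_mod_cast kap_eq hm n
  rw [innerW, tsum_eq_sum (s := Finset.range (k + 2))]
  · rcases k with _ | k
    · rw [Finset.sum_range_succ, Finset.sum_range_one]
      simp only [bdAct, zero_add, h1, h0 1 (by omega), h0 2 (by omega)]
      simp
      linear_combination y 1 * hp 0
    · rw [Finset.sum_range_succ, Finset.sum_range_succ, Finset.sum_range_succ,
        Finset.sum_eq_zero, zero_add]
      · simp only [bdAct, h1, h0 (k + 2) (by omega), h0 k (by omega), h0 (k + 3) (by omega)]
        rcases k with _ | k
        · simp only [zero_add, h1, h0 0 (by omega)]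
          simp
          linear_combination (y 2) * hp 1 - y 0 * hp 0
        · simp only [h1, h0 k (by omega), h0 (k + 1) (by omega)]
          simp
          linear_combination (y (k + 3)) * hp (k + 2) - y (k + 1) * hp (k + 1)
      · intro n hn
        have hn := Finset.mem_range.1 hn
        rcases n with _ | n
        · simp only [bdAct]; rw [h0 0 (by omega), h0 1 (by omega)]; simp
        · simp only [bdAct]
          rw [h0 n (by omega), h0 (n + 1) (by omega), h0 (n + 2) (by omega)]; simp
  · intro n hn
    have hn : k + 2 ≤ n := by simpa using hn
    obtain ⟨n, rfl⟩ := Nat.exists_eq_add_of_le' (show 1 ≤ n by omega)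
    simp only [bdAct]
    rw [h0 n (by omega), h0 (n + 1) (by omega), h0 (n + 2) (by omega)]; simp

lemma Rates.selfAdjoint (R : Rates l m) : IsSelfAdjointW (bdPi l m) (bdAct l m) := by
  intro y z hy hz
  constructor
  · intro h
    have hT : bdAct l m y = z := by
      funext k
      have hk := h _ (single_mem_Dom k)
      rw [innerW_act_single R.hm, innerW_single] at hk
      have : (bdPi l m k : ℂ) ≠ 0 := by exact_mod_cast (R.pi_pos k).ne'
      exact mul_left_cancel₀ this hk
    exact ⟨⟨hy, hT ▸ hz⟩, hT⟩
  · rintro ⟨hy', rfl⟩ x hx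
    exact R.symm hx hy'

/-! ### Absence of subordinate solutions and of eigenvalues -/

/-- An element of the domain solving `Q x = -s x`, `s ≥ 0`, away from the first coordinate
vanishes. This excludes eigenvalues and also the solvability of `(Q + s) x = δ₀`. -/
lemma Rates.eq_zero_of_tail (R : Rates l m) {s : ℝ} (hs : 0 ≤ s) {x : ℕ → ℂ}
    (hx : x ∈ DomW (bdPi l m) (bdAct l m))
    (h : ∀ n, bdAct l m x (n + 1) = -s * x (n + 1)) : x = 0 := by
  have hE := R.energy hx
  have hf : ∀ n, flux l m x (n + 1) =
      flux l m x n - ((s * bdPi l m (n + 1) : ℝ) : ℂ) * x (n + 1) := fun n => by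
    have := pi_act_succ (l := l) R.hm x n
    rw [h] at this
    push_cast
    linear_combination -this
  -- to be applied to the real and to the imaginary parts of `x` and its flux
  have main : ∀ u f : ℕ → ℝ, (∀ n, u (n + 1) = u n + f n / kap l m n) →
      (∀ n, f (n + 1) = f n - s * bdPi l m (n + 1) * u (n + 1)) →
      (∀ n, |u n| ≤ ‖x n‖) → (∀ n, |f n| ≤ ‖flux l m x n‖) → ∀ n, u n = 0 := by
    intro u f hu hf hux hfx n
    have su : Summable fun n => bdPi l m n * u n ^ 2 := by
      refine Summable.of_nonneg_of_le (fun n => mul_nonneg (R.pi_pos n).le (sq_nonneg _))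
        (fun n => ?_) hx.1
      have := pow_le_pow_left₀ (abs_nonneg _) (hux n) 2
      rw [sq_abs] at this
      exact mul_le_mul_of_nonneg_left this (R.pi_pos n).le
    have sf : Summable fun n => f n ^ 2 / kap l m n := by
      refine Summable.of_nonneg_of_le (fun n => div_nonneg (sq_nonneg _) (R.kap_pos n).le)
        (fun n => ?_) hE
      have := pow_le_pow_left₀ (abs_nonneg _) (hfx n) 2
      rw [sq_abs] at this
      rw [one_div_mul_eq_div]
      exact div_le_div_of_nonneg_right this (R.kap_pos n).le
    rcases hs.eq_or_lt with rfl | hs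
    · exact (R.system_zero hu (fun n => by simpa using hf n) su sf n).1
    · exact (R.system_pos hs hu hf su sf n).1
  have hre := main (fun n => (x n).re) (fun n => (flux l m x n).re)
    (fun n => by
      have := congrArg Complex.re (R.next_eq x n)
      rwa [Complex.add_re, Complex.div_ofReal_re] at this)
    (fun n => by
      have := congrArg Complex.re (hf n)
      rwa [Complex.sub_re, Complex.re_ofReal_mul] at this)
    (fun n => Complex.abs_re_le_norm _) (fun n => Complex.abs_re_le_norm _)
  have him := main (fun n => (x n).im) (fun n => (flux l m x n).im)
    (fun n => by
      have := congrArg Complex.im (R.next_eq x n)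
      rwa [Complex.add_im, Complex.div_ofReal_im] at this)
    (fun n => by
      have := congrArg Complex.im (hf n)
      rwa [Complex.sub_im, Complex.im_ofReal_mul] at this)
    (fun n => Complex.abs_im_le_norm _) (fun n => Complex.abs_im_le_norm _)
  funext n
  exact Complex.ext (hre n) (him n)

lemma innerW_self (w : ℕ → ℝ) (x : ℕ → ℂ) :
    innerW w x x = ((∑' n, w n * ‖x n‖ ^ 2 : ℝ) : ℂ) := by
  rw [innerW, Complex.ofReal_tsum]
  refine tsum_congr fun n => ?_
  rw [mul_assoc, Complex.star_def, Complex.conj_mul']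
  push_cast; rfl

/-- Eigenvalues would be nonpositive real, because `Q` is symmetric and `-Q` is nonnegative. -/
lemma Rates.no_eigen (R : Rates l m) {z : ℂ} {x : ℕ → ℂ}
    (hx : x ∈ DomW (bdPi l m) (bdAct l m)) (h : bdAct l m x = fun n => z * x n) : x = 0 := by
  by_contra hne
  obtain ⟨k, hk⟩ := Function.ne_iff.1 hne
  have hX : 0 < ∑' n, bdPi l m n * ‖x n‖ ^ 2 := by
    refine hx.1.tsum_pos (fun n => mul_nonneg (R.pi_pos n).le (sq_nonneg _)) k ?_
    have : 0 < ‖x k‖ := norm_pos_iff.2 hk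
    exact mul_pos (R.pi_pos k) (by positivity)
  have hE : 0 ≤ ∑' n, 1 / kap l m n * ‖flux l m x n‖ ^ 2 :=
    tsum_nonneg fun n => mul_nonneg (one_div_nonneg.2 (R.kap_pos n).le) (sq_nonneg _)
  have h1 := R.form hx hx
  have h2 : innerW (bdPi l m) x (bdAct l m x) = z * innerW (bdPi l m) x x := by
    rw [h, innerW, innerW, ← tsum_mul_left]
    exact tsum_congr fun n => by ring
  rw [h2, innerW_self, innerW_self, mul_assoc, Complex.star_def, Complex.conj_mul'] at h1
  set X := ∑' n, bdPi l m n * ‖x n‖ ^ 2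
  set E := ∑' n, 1 / kap l m n * ‖flux l m x n‖ ^ 2
  have hXc : (X : ℂ) ≠ 0 := by exact_mod_cast hX.ne'
  have hz : z = -(((E + m 0 * ‖x 0‖ ^ 2) / X : ℝ) : ℂ) := by
    push_cast
    rw [← neg_div, eq_div_iff hXc, h1]; ring
  refine hne (R.eq_zero_of_tail (s := (E + m 0 * ‖x 0‖ ^ 2) / X) ?_ hx fun n => ?_)
  · have := R.hm0
    positivity
  · rw [h, hz]

/-! ### The resolvent set -/

/-- The unique solution of `(Q - z) x = y` (as a formal recurrence) with `x₀ = α`. -/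
def sol (l m : ℕ → ℝ) (z : ℂ) (y : ℕ → ℂ) (α : ℂ) : ℕ → ℂ
  | 0 => α
  | 1 => (y 0 + (z + (l 0 + m 0)) * α) / l 0
  | n + 2 => (y (n + 1) + (z + (l (n + 1) + m (n + 1))) * sol l m z y α (n + 1)
      - m (n + 1) * sol l m z y α n) / l (n + 1)

lemma sol_spec (hl : ∀ n, 0 < l n) (z : ℂ) (y : ℕ → ℂ) (α : ℂ) (n : ℕ) :
    bdAct l m (sol l m z y α) n - z * sol l m z y α n = y n := by
  have : ∀ n, (l n : ℂ) ≠ 0 := fun n => by exact_mod_cast (hl n).ne'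
  rcases n with _ | n
  · have h := this 0
    simp only [bdAct, sol]; push_cast; field_simp; ring
  · have h := this (n + 1)
    simp only [bdAct, sol]; push_cast; field_simp; ring

lemma sol_linear (z : ℂ) (y : ℕ → ℂ) (α : ℂ) (n : ℕ) :
    sol l m z y α n = sol l m z y 0 n + α * sol l m z 0 1 n := by
  induction n using Nat.strong_induction_on with
  | _ n ih =>
    rcases n with _ | _ | n
    · simp [sol]
    · simp [sol]; ring
    · rw [sol, sol, sol, ih n (by omega), ih (n + 1) (by omega)]
      simp only [Pi.zero_apply]; ring

/-- A lower bound for the distance from `z` to `(-∞, 0]`, in a form suited to the numerical range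
argument. -/
lemma dist_bound (z : ℂ) {e X : ℝ} (he : 0 ≤ e) (hX : 0 ≤ X) :
    max |z.im| z.re * X ≤ ‖(e : ℂ) + z * X‖ := by
  rcases max_cases |z.im| z.re with ⟨h, _⟩ | ⟨h, _⟩
  · rw [h]
    have := Complex.abs_im_le_norm ((e : ℂ) + z * X)
    simpa [abs_mul, abs_of_nonneg hX] using this
  · rw [h]
    have := Complex.re_le_norm ((e : ℂ) + z * X)
    simp at this
    linarith

/-- A priori bound for the equation on `{0, …, K}` with Dirichlet condition at `K + 1`. -/
lemma Rates.dirichlet_bound (R : Rates l m) {z : ℂ} {d : ℝ} (hd : d = max |z.im| z.re)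
    (hd0 : 0 < d) {x y : ℕ → ℂ} (h : ∀ n, bdAct l m x n - z * x n = y n) {K : ℕ}
    (hK : x (K + 1) = 0) :
    ∑ n ∈ Finset.range (K + 1), bdPi l m n * ‖x n‖ ^ 2 ≤
      (∑ n ∈ Finset.range (K + 1), bdPi l m n * ‖y n‖ ^ 2) / d ^ 2 := by
  set X := ∑ n ∈ Finset.range (K + 1), bdPi l m n * ‖x n‖ ^ 2 with hXdef
  set Y := ∑ n ∈ Finset.range (K + 1), bdPi l m n * ‖y n‖ ^ 2 with hYdef
  have hX : 0 ≤ X := Finset.sum_nonneg fun n _ => mul_nonneg (R.pi_pos n).le (sq_nonneg _)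
  have ess : ∀ (r : ℝ) (u : ℂ), (r : ℂ) * star u * u = ((r * ‖u‖ ^ 2 : ℝ) : ℂ) := fun r u => by
    rw [mul_assoc, Complex.star_def, Complex.conj_mul']; push_cast; rfl
  set e : ℝ := kap l m K * ‖x K‖ ^ 2
    + ∑ n ∈ Finset.range K, 1 / kap l m n * ‖flux l m x n‖ ^ 2 + m 0 * ‖x 0‖ ^ 2 with he
  have he0 : 0 ≤ e := by
    have := R.hm0
    have h1 := R.kap_pos K
    have h2 : 0 ≤ ∑ n ∈ Finset.range K, 1 / kap l m n * ‖flux l m x n‖ ^ 2 :=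
      Finset.sum_nonneg fun n _ => mul_nonneg (one_div_nonneg.2 (R.kap_pos n).le) (sq_nonneg _)
    positivity
  have hform := R.form_partial x x K
  have hflux : star (x K) * flux l m x K = -((kap l m K * ‖x K‖ ^ 2 : ℝ) : ℂ) := by
    rw [← ess, flux, hK]; ring
  simp only [ess] at hform
  rw [hflux] at hform
  have hxy : ∑ n ∈ Finset.range (K + 1), (bdPi l m n : ℂ) * star (x n) * y n
      = -((e : ℂ) + z * X) := by
    have : ∀ n, (bdPi l m n : ℂ) * star (x n) * y n =
        (bdPi l m n : ℂ) * star (x n) * bdAct l m x n - z * ((bdPi l m n * ‖x n‖ ^ 2 : ℝ) : ℂ) := by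
      intro n; rw [← ess, ← h n]; ring
    simp only [this]
    rw [Finset.sum_sub_distrib, ← Finset.mul_sum, hform, he, hXdef]
    push_cast; ring
  have hlow := dist_bound z he0 hX
  rw [← hd, ← norm_neg, ← hxy] at hlow
  have hup : ‖∑ n ∈ Finset.range (K + 1), (bdPi l m n : ℂ) * star (x n) * y n‖
      ≤ d / 2 * X + 1 / (2 * d) * Y := by
    refine (norm_sum_le _ _).trans ?_
    rw [hXdef, hYdef, Finset.mul_sum, Finset.mul_sum, ← Finset.sum_add_distrib]
    refine Finset.sum_le_sum fun n _ => ?_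
    have hp := R.pi_pos n
    rw [norm_mul, norm_mul, norm_star, Complex.norm_real, Real.norm_of_nonneg hp.le]
    have e1 : d / 2 * (bdPi l m n * ‖x n‖ ^ 2) + 1 / (2 * d) * (bdPi l m n * ‖y n‖ ^ 2)
        - bdPi l m n * ‖x n‖ * ‖y n‖ = bdPi l m n * (d * ‖x n‖ - ‖y n‖) ^ 2 / (2 * d) := by
      field_simp; ring
    have : 0 ≤ bdPi l m n * (d * ‖x n‖ - ‖y n‖) ^ 2 / (2 * d) := by positivity
    linarith
  have hfin : d / 2 * X ≤ 1 / (2 * d) * Y := by linarith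
  rw [le_div_iff₀ (by positivity)]
  have := mul_le_mul_of_nonneg_left hfin (show 0 ≤ 2 * d by positivity)
  have e1 : 2 * d * (1 / (2 * d) * Y) = Y := by field_simp
  linarith

/-- Outside `(-∞, 0]` the operator `Q - z` is onto: the Dirichlet solutions on `{0, …, K}` are
`sol` with suitable, uniformly bounded, initial values `α K`, and any limit point of `α` gives a
solution satisfying the same `ℓ²(π)` bound. -/
lemma Rates.surj (R : Rates l m) {z : ℂ} (hz : 0 < max |z.im| z.re) {y : ℕ → ℂ}
    (hy : MemL2w (bdPi l m) y) :
    ∃ x ∈ DomW (bdPi l m) (bdAct l m), (fun n => bdAct l m x n - z * x n) = y := by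
  set d := max |z.im| z.re with hd
  have hp0 : ∀ K, sol l m z 0 1 (K + 1) ≠ 0 := by
    intro K h0
    have hb := R.dirichlet_bound hd hz (sol_spec (m := m) R.hl z 0 1) h0
    have h1 : bdPi l m 0 * ‖sol l m z 0 1 0‖ ^ 2 ≤
        ∑ n ∈ Finset.range (K + 1), bdPi l m n * ‖sol l m z 0 1 n‖ ^ 2 :=
      Finset.single_le_sum (f := fun n => bdPi l m n * ‖sol l m z 0 1 n‖ ^ 2)
        (fun n _ => mul_nonneg (R.pi_pos n).le (sq_nonneg _)) (by simp)
    simp [bdPi, sol] at hb h1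
    linarith
  set α : ℕ → ℂ := fun K => - sol l m z y 0 (K + 1) / sol l m z 0 1 (K + 1) with hα
  have hα0 : ∀ K, sol l m z y (α K) (K + 1) = 0 := fun K => by
    have := hp0 K
    rw [sol_linear]; simp only [hα]; field_simp; ring
  set C := (∑' n, bdPi l m n * ‖y n‖ ^ 2) / d ^ 2 with hC
  have hb : ∀ K, ∑ n ∈ Finset.range (K + 1), bdPi l m n * ‖sol l m z y (α K) n‖ ^ 2 ≤ C :=
    fun K => (R.dirichlet_bound hd hz (sol_spec R.hl z y (α K)) (hα0 K)).trans
      (div_le_div_of_nonneg_right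
        (hy.sum_le_tsum _ fun n _ => mul_nonneg (R.pi_pos n).le (sq_nonneg _)) (by positivity))
  have hle : ∀ K, ∀ M ≤ K, ∑ n ∈ Finset.range M, bdPi l m n * ‖sol l m z y (α K) n‖ ^ 2 ≤ C :=
    fun K M hM => (Finset.sum_le_sum_of_subset_of_nonneg
      (Finset.range_subset_range.2 (by omega))
      (fun n _ _ => mul_nonneg (R.pi_pos n).le (sq_nonneg _))).trans (hb K)
  have hbd : ∀ K, α K ∈ Metric.closedBall (0 : ℂ) (√C) := fun K => by
    have h1 : bdPi l m 0 * ‖sol l m z y (α K) 0‖ ^ 2 ≤ C :=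
      (Finset.single_le_sum (f := fun n => bdPi l m n * ‖sol l m z y (α K) n‖ ^ 2)
        (fun n _ => mul_nonneg (R.pi_pos n).le (sq_nonneg _)) (by simp)).trans (hb K)
    simp only [bdPi, sol, one_mul] at h1
    rw [mem_closedBall_zero_iff]
    exact Real.le_sqrt_of_sq_le h1
  obtain ⟨β, -, φ, hφ, hlim⟩ := (isCompact_closedBall (0 : ℂ) (√C)).tendsto_subseq hbd
  have hpt : ∀ n, Tendsto (fun k => sol l m z y (α (φ k)) n) atTop (𝓝 (sol l m z y β n)) := by
    intro n
    rw [sol_linear z y β n]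
    refine Tendsto.congr (fun k => (sol_linear z y (α (φ k)) n).symm) ?_
    exact (hlim.mul_const _).const_add _
  have hfin : ∀ M, ∑ n ∈ Finset.range M, bdPi l m n * ‖sol l m z y β n‖ ^ 2 ≤ C := by
    intro M
    refine le_of_tendsto
      (tendsto_finsetSum _ fun n _ => (((hpt n).norm.pow 2).const_mul (bdPi l m n))) ?_
    filter_upwards [eventually_ge_atTop M] with k hk
    exact hle _ _ (hk.trans (hφ.id_le k))
  have hmem : MemL2w (bdPi l m) (sol l m z y β) :=
    summable_of_sum_range_le (fun n => mul_nonneg (R.pi_pos n).le (sq_nonneg _)) hfin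
  have heq : ∀ n, bdAct l m (sol l m z y β) n = y n + z * sol l m z y β n := fun n => by
    rw [← sol_spec (m := m) R.hl z y β n]; ring
  refine ⟨_, ⟨hmem, ?_⟩, funext fun n => sol_spec R.hl z y β n⟩
  refine Summable.of_nonneg_of_le (fun n => mul_nonneg (R.pi_pos n).le (sq_nonneg _))
    (fun n => ?_) ((hy.mul_left 2).add (hmem.mul_left (2 * ‖z‖ ^ 2)))
  rw [heq]
  have h1 := norm_add_le (y n) (z * sol l m z y β n)
  rw [norm_mul] at h1
  have h2 := pow_le_pow_left₀ (norm_nonneg _) h1 2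
  have h3 : ‖y n + z * sol l m z y β n‖ ^ 2 ≤
      2 * ‖y n‖ ^ 2 + 2 * ‖z‖ ^ 2 * ‖sol l m z y β n‖ ^ 2 := by
    nlinarith [sq_nonneg (‖y n‖ - ‖z‖ * ‖sol l m z y β n‖)]
  have := mul_le_mul_of_nonneg_left h3 (R.pi_pos n).le
  linarith

end

/-- Theorem on birth and death processes: under (a)–(c) for the interlaced sequence,
the generator `Q` is self-adjoint on `ℓ²(π)`, has no eigenvalues, and its spectrum
is `(-∞, 0]`. -/
theorem bd_generator_selfAdjoint_spectrum
    (l m : ℕ → ℝ) (hl : ∀ n, 0 < l n) (hm : ∀ n, 0 < m (n + 1)) (hm0 : 0 ≤ m 0)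
    (h1 : Tendsto (interlace l m) atTop atTop)
    (h2 : ¬ Summable fun n : ℕ => 1 / interlace l m n)
    (h3 : Summable fun n : ℕ => max (-(interlace l m (n + 1) / interlace l m n - 1)) 0) :
    IsSelfAdjointW (bdPi l m) (bdAct l m) ∧
    eigenW (bdPi l m) (bdAct l m) = ∅ ∧
    spectrumW (bdPi l m) (bdAct l m) = {z : ℂ | ∃ r : ℝ, r ≤ 0 ∧ z = (r : ℂ)} := by
  have R := rates_of_interlace hl hm hm0 h1 h2 h3
  refine ⟨R.selfAdjoint, ?_, ?_⟩
  · ext z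
    simp only [Set.mem_empty_iff_false, iff_false]
    rintro ⟨x, hx, hne, h⟩
    exact hne (R.no_eigen hx h)
  · ext z
    constructor
    · intro h
      by_contra hz
      refine h ⟨fun x hx hxz => R.no_eigen hx hxz, fun y hy => R.surj ?_ hy⟩
      by_contra hd
      have hd := not_lt.1 hd
      have him : z.im = 0 :=
        abs_eq_zero.1 (le_antisymm ((le_max_left _ _).trans hd) (abs_nonneg _))
      exact hz ⟨z.re, (le_max_right _ _).trans hd, Complex.ext rfl (by simpa using him)⟩
    · rintro ⟨r, hr, rfl⟩ ⟨-, hsurj⟩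
      -- `δ₀` is not in the range of `Q - r`
      obtain ⟨x, hx, hxy⟩ := hsurj (Pi.single 0 1) (single_mem_Dom (l := l) (m := m) 0).1
      have hx0 : x = 0 := by
        refine R.eq_zero_of_tail (s := -r) (by linarith) hx fun n => ?_
        have h := congrFun hxy (n + 1)
        rw [Pi.single_eq_of_ne (by omega)] at h
        push_cast
        linear_combination h
      have h := congrFun hxy 0
      rw [hx0] at h
      simp [bdAct] at h
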